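/- Let a, b, t be natural numbers with gcd(a,b) = gcd(b,t) = 1 and t dividing a²+1, and set c = b·(a²+1)/t. Let t* be an integer with t·t* ≡ 1 (mod b). Then S(a, c) = (b² − 1)·a/(t·b) − S(a·b, t) + S(a·t*, b). -/

import Mathlib

/-- The sawtooth function `((x))`: `x - ⌊x⌋ - 1/2` if `x ∉ ℤ`, and `0` if `x ∈ ℤ`. -/
noncomputable def saw (x : ℝ) : ℝ := if Int.fract x = 0 then 0 else x - ⌊x⌋ - 1/2

/-- The classical Dedekind sum `s(a,b) = ∑_{k=1}^b ((k/b)) ((a k / b))`. -/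
noncomputable def dedekindSum (a : ℤ) (b : ℕ) : ℝ :=
  ∑ k ∈ Finset.Icc 1 b, saw ((k : ℝ) / b) * saw ((a : ℝ) * k / b)

/-- The normalized Dedekind sum `S(a,b) = 12 s(a,b)`. -/
noncomputable def S (a : ℤ) (b : ℕ) : ℝ := 12 * dedekindSum a b

/-!
For pairwise coprime `a`, `b`, `c`, the function `x ↦ ((ax)) ((bx)) ((cx))` has period `1`, so its
increments over a period add up to `0`. Between consecutive midpoints of the grid of multiples of
`1 / (abc)`, each factor changes by a constant minus its unit jump at the grid point, if any. The
product rule for finite differences then turns the vanishing sum into Rademacher's three-term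
relation for the sums `∑ ((bk/n)) ((ck/n))`. The theorem is the difference of this relation for
`(a, b, t)` and for `(a, c, 1)`: as `t * ((a² + 1) / t) ≡ 1` modulo `a` and `a² ≡ -1` modulo `t`,
rescaling the summation variable identifies the sums modulo `a` and turns the remaining ones into
those of the statement.
-/

open Finset

section PeriodicSums

variable {M : Type*} [AddCommMonoid M]

theorem sum_range_mul_eq_sum_sum (m n : ℕ) (f : ℕ → M) :
    ∑ j ∈ range (m * n), f j = ∑ i ∈ range m, ∑ l ∈ range n, f (i + m * l) := by
  induction n with
  | zero => simp
  | succ n ih =>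
    rw [Nat.mul_succ, sum_range_add, ih]
    simp only [sum_range_succ, sum_add_distrib, add_comm (m * n)]

theorem sum_range_mul_ite_dvd {m : ℕ} (hm : m ≠ 0) (n : ℕ) (f : ℕ → M) :
    ∑ j ∈ range (m * n), (if m ∣ j then f j else 0) = ∑ k ∈ range n, f (m * k) := by
  rw [sum_range_mul_eq_sum_sum, sum_eq_single_of_mem 0 (mem_range.2 hm.pos)]
  · simp
  · intro i hi hi0
    have hmi : ¬ m ∣ i := Nat.not_dvd_of_pos_of_lt hi0.pos (mem_range.1 hi)
    exact sum_eq_zero fun l _ ↦ if_neg (mt (Nat.dvd_add_left (dvd_mul_right m l)).1 hmi)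

theorem sum_range_eq_sum_zmod (n : ℕ) [NeZero n] (f : ℕ → M) :
    ∑ k ∈ range n, f k = ∑ x : ZMod n, f x.val := by
  cases n with
  | zero => exact (NeZero.ne 0 rfl).elim
  | succ n => exact sum_range f

theorem sum_range_periodic_mul {f : ℤ → M} {n : ℕ} (hf : Function.Periodic f n) {u : ℤ}
    (hu : IsCoprime u n) : ∑ k ∈ range n, f (u * k) = ∑ k ∈ range n, f k := by
  rcases eq_or_ne n 0 with rfl | hn
  · simp
  have : NeZero n := ⟨hn⟩
  have apply_emod (i : ℤ) : f (i % n) = f i := by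
    rw [Int.emod_def, mul_comm]
    exact hf.sub_int_mul_eq _
  rw [sum_range_eq_sum_zmod n fun k ↦ f (u * k), sum_range_eq_sum_zmod n fun k ↦ f k]
  refine Fintype.sum_equiv (ZMod.unitOfIsCoprime u hu).mulLeft _ _ fun x ↦ ?_
  have hval : (((u : ZMod n) * x).val : ℤ) = u * x.val % n := by
    rw [← ZMod.val_intCast]
    simp
  simp [hval, apply_emod]

end PeriodicSums

section ElementarySums

variable {K : Type*} [Field K] [CharZero K]

theorem sum_range_natCast (n : ℕ) : ∑ k ∈ range n, (k : K) = n * (n - 1) / 2 := by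
  induction n with
  | zero => simp
  | succ n ih =>
    rw [sum_range_succ, ih]
    push_cast
    ring

theorem sum_range_natCast_sq (n : ℕ) :
    ∑ k ∈ range n, (k : K) ^ 2 = n * (n - 1) * (2 * n - 1) / 6 := by
  induction n with
  | zero => simp
  | succ n ih =>
    rw [sum_range_succ, ih]
    push_cast
    ring

theorem sum_range_ite_dvd_one {m N : ℕ} (hN : N ≠ 0) (hm : m ∣ N) :
    ∑ j ∈ range N, (if m ∣ j then (1 : K) else 0) = (N : K) / m := by
  obtain ⟨k, rfl⟩ := hm
  have hm0 : m ≠ 0 := left_ne_zero_of_mul hN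
  rw [sum_range_mul_ite_dvd hm0 k fun _ ↦ (1 : K)]
  simp [hm0]

end ElementarySums

section Sawtooth

theorem saw_periodic : Function.Periodic saw 1 := fun x ↦ by
  simp [saw]

theorem saw_intCast (m : ℤ) : saw m = 0 := by
  simp [saw]

theorem saw_zero : saw 0 = 0 := by
  simp [saw]

theorem saw_of_mem_Ioo {x : ℝ} {m : ℤ} (hx : x ∈ Set.Ioo (m : ℝ) (m + 1)) :
    saw x = x - m - 1 / 2 := by
  have hfloor : ⌊x⌋ = m := Int.floor_eq_iff.2 ⟨hx.1.le, hx.2⟩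
  have hfract : Int.fract x ≠ 0 := by
    rw [Int.fract, hfloor]
    exact (sub_pos.2 hx.1).ne'
  rw [saw, if_neg hfract, hfloor]

theorem saw_neg (x : ℝ) : saw (-x) = -saw x := by
  by_cases hx : Int.fract x = 0
  · simp [saw, hx]
  have hlt : (⌊x⌋ : ℝ) < x := sub_pos.1 ((Int.fract_nonneg x).lt_of_ne' hx)
  have hgt : x < ⌊x⌋ + 1 := Int.lt_floor_add_one x
  rw [saw_of_mem_Ioo (m := ⌊x⌋) ⟨hlt, hgt⟩,
    saw_of_mem_Ioo (m := -⌊x⌋ - 1) ⟨by push_cast; linarith, by push_cast; linarith⟩]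
  push_cast
  ring

theorem saw_add_intCast_div_of_dvd (x : ℝ) {n : ℕ} {m : ℤ} (h : (n : ℤ) ∣ m) :
    saw ((x + m) / n) = saw (x / n) := by
  obtain ⟨k, rfl⟩ := h
  rcases eq_or_ne n 0 with rfl | hn
  · simp
  have hn' : (n : ℝ) ≠ 0 := mod_cast hn
  have hshift : (x + ((n * k : ℤ) : ℝ)) / n = x / n + k * 1 := by
    push_cast
    field_simp
  rw [hshift, saw_periodic.int_mul k]

theorem saw_intCast_div_congr {n : ℕ} {i j : ℤ} (h : i ≡ j [ZMOD n]) :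
    saw (i / n) = saw (j / n) := by
  simpa using (saw_add_intCast_div_of_dvd i h.dvd).symm

theorem saw_natCast_div {n k : ℕ} (hk : k ∈ range n) :
    saw (k / n) = k / n - 1 / 2 + if k = 0 then 1 / 2 else 0 := by
  have hn : (0 : ℝ) < n := mod_cast (Nat.zero_le k).trans_lt (mem_range.1 hk)
  rcases eq_or_ne k 0 with rfl | hk0
  · simp [saw_zero]
  have hpos : (0 : ℝ) < k / n := div_pos (mod_cast hk0.pos) hn
  have hlt : (k : ℝ) / n < 1 := (div_lt_one hn).2 (mod_cast mem_range.1 hk)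
  rw [saw_of_mem_Ioo (m := 0) (by simpa using ⟨hpos, hlt⟩), if_neg hk0]
  simp

theorem sum_saw_natCast_div (n : ℕ) : ∑ k ∈ range n, saw (k / n) = 0 := by
  rcases eq_or_ne n 0 with rfl | hn
  · simp
  rw [sum_congr rfl fun k hk ↦ saw_natCast_div hk, sum_add_distrib, sum_sub_distrib, ← sum_div,
    sum_range_natCast]
  simp only [sum_const, card_range, nsmul_eq_mul, sum_ite_eq', mem_range, hn.pos, if_true]
  field_simp
  ring

theorem periodic_sum_saw_add_natCast_div (n : ℕ) :
    Function.Periodic (fun x : ℝ ↦ ∑ k ∈ range n, saw ((x + k) / n)) 1 := by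
  intro x
  have hwrap : saw ((x + n) / n) = saw (x / n) := by
    simpa using saw_add_intCast_div_of_dvd x (dvd_refl (n : ℤ))
  have hlast := sum_range_succ (fun k : ℕ ↦ saw ((x + k) / n)) n
  have hfirst := sum_range_succ' (fun k : ℕ ↦ saw ((x + k) / n)) n
  simp only [Nat.cast_add, Nat.cast_one, Nat.cast_zero, add_zero] at hfirst
  simp only [add_assoc, add_comm (1 : ℝ)]
  linarith

theorem sum_saw_add_natCast_div (x : ℝ) {n : ℕ} (hn : n ≠ 0) :
    ∑ k ∈ range n, saw ((x + k) / n) = saw x := by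
  have hn0 : (0 : ℝ) < n := mod_cast hn.pos
  have fract_eq : Int.fract x = x - ⌊x⌋ * 1 := by rw [mul_one, Int.fract]
  rw [← saw_periodic.sub_int_mul_eq ⌊x⌋,
    ← (periodic_sum_saw_add_natCast_div n).sub_int_mul_eq ⌊x⌋, ← fract_eq]
  rcases (Int.fract_nonneg x).eq_or_lt with hx | hx
  · simpa [← hx, saw_zero] using sum_saw_natCast_div n
  have hterm (k : ℕ) (hk : k ∈ range n) :
      saw ((Int.fract x + k) / n) = (Int.fract x + k) / n - 1 / 2 := by
    have hkn : (k : ℝ) + 1 ≤ n := mod_cast mem_range.1 hk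
    have hlt : (Int.fract x + k) / n < 1 := (div_lt_one hn0).2 (by linarith [Int.fract_lt_one x])
    rw [saw_of_mem_Ioo (m := 0) (by simpa using ⟨by positivity, hlt⟩), Int.cast_zero, sub_zero]
  rw [sum_congr rfl hterm, sum_sub_distrib, ← sum_div, sum_add_distrib, sum_range_natCast,
    saw_of_mem_Ioo (m := 0) (by simpa using ⟨hx, Int.fract_lt_one x⟩)]
  simp only [sum_const, card_range, nsmul_eq_mul, Int.cast_zero]
  field_simp
  ring

theorem sum_saw_add_mul_div (x : ℝ) {n : ℕ} (hn : n ≠ 0) {u : ℤ} (hu : IsCoprime u n) :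
    ∑ k ∈ range n, saw ((x + u * k) / n) = saw x := by
  have hperiodic : Function.Periodic (fun k : ℤ ↦ saw ((x + k) / n)) n := fun k ↦ by
    simpa [add_assoc] using saw_add_intCast_div_of_dvd (x + k) (dvd_refl (n : ℤ))
  simpa [sum_saw_add_natCast_div x hn] using sum_range_periodic_mul hperiodic hu

end Sawtooth

section HomogeneousSums

/-- The homogeneous (Rademacher) Dedekind sum `∑ ((bk/n)) ((ck/n))` over `k` modulo `n`, which
contains `s(a, n)` as the case `b = a`, `c = 1` and is symmetric in `b` and `c`. -/
noncomputable def homDedekindSum (b c : ℤ) (n : ℕ) : ℝ :=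
  ∑ k ∈ range n, saw (b * k / n) * saw (c * k / n)

theorem S_eq_homDedekindSum (a : ℤ) (n : ℕ) : S a n = 12 * homDedekindSum a 1 n := by
  rcases eq_or_ne n 0 with rfl | hn
  · simp [S, dedekindSum, homDedekindSum]
  have hn' : (n : ℝ) ≠ 0 := mod_cast hn
  have saw_div_self : saw (n / n) = 0 := by simpa [hn'] using saw_intCast 1
  have hshift := sum_range_succ' (fun k : ℕ ↦ saw (k / n) * saw (a * k / n)) n
  rw [sum_range_succ] at hshift
  rw [S, dedekindSum, homDedekindSum, ← Ico_add_one_right_eq_Icc, sum_Ico_eq_sum_range]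
  simp_all [saw_zero, mul_comm, add_comm]

variable (b c : ℤ) (n : ℕ)

theorem homDedekindSum_comm : homDedekindSum b c n = homDedekindSum c b n := by
  simp only [homDedekindSum, mul_comm]

theorem homDedekindSum_neg_left : homDedekindSum (-b) c n = -homDedekindSum b c n := by
  simp [homDedekindSum, neg_div, saw_neg]

variable {n}

theorem homDedekindSum_congr {b b' c c' : ℤ} (hb : b ≡ b' [ZMOD n]) (hc : c ≡ c' [ZMOD n]) :
    homDedekindSum b c n = homDedekindSum b' c' n :=
  sum_congr rfl fun k _ ↦ by
    simpa using congr_arg₂ (· * ·) (saw_intCast_div_congr (hb.mul_right k))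
      (saw_intCast_div_congr (hc.mul_right k))

theorem homDedekindSum_mul_left_mul_left {u : ℤ} (hu : IsCoprime u n) :
    homDedekindSum (u * b) (u * c) n = homDedekindSum b c n := by
  have hperiodic : Function.Periodic (fun k : ℤ ↦ saw (b * k / n) * saw (c * k / n)) n := by
    intro k
    simpa [mul_add] using congr_arg₂ (· * ·)
      (saw_add_intCast_div_of_dvd (b * k) (dvd_mul_left (n : ℤ) b))
      (saw_add_intCast_div_of_dvd (c * k) (dvd_mul_left (n : ℤ) c))
  simpa [homDedekindSum, mul_assoc, mul_left_comm] using sum_range_periodic_mul hperiodic hu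

variable (n)

theorem homDedekindSum_natCast_mul_right {b : ℤ} {q : ℕ} (hq : q ≠ 0) (hbq : IsCoprime b q) :
    homDedekindSum b (q * c) (n * q) = homDedekindSum b c n := by
  have hq' : (q : ℝ) ≠ 0 := mod_cast hq
  rw [homDedekindSum, sum_range_mul_eq_sum_sum]
  refine sum_congr rfl fun i hi ↦ ?_
  have hn' : (n : ℝ) ≠ 0 := mod_cast (Nat.zero_le i |>.trans_lt (mem_range.1 hi)).ne'
  rw [← sum_saw_add_mul_div (b * i / n) hq hbq, sum_mul]
  refine sum_congr rfl fun l _ ↦ ?_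
  have hleft : (b : ℝ) * (i + n * l : ℕ) / (n * q : ℕ) = (b * i / n + b * l) / q := by
    push_cast
    field_simp
  have hright : ((q * c : ℤ) : ℝ) * (i + n * l : ℕ) / (n * q : ℕ) =
      (c * i + (n * (c * l) : ℤ)) / n := by
    push_cast
    field_simp
  rw [hleft, hright, saw_add_intCast_div_of_dvd _ (dvd_mul_right _ _)]

theorem homDedekindSum_one_one : homDedekindSum 1 1 n = (n - 1) * (n - 2) / (12 * n) := by
  rcases eq_or_ne n 0 with rfl | hn
  · simp [homDedekindSum]
  have hterm (k : ℕ) (hk : k ∈ range n) :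
      saw ((1 : ℤ) * k / n) * saw ((1 : ℤ) * k / n) =
        (k : ℝ) ^ 2 / n ^ 2 - k / n + 1 / 4 - if k = 0 then 1 / 4 else 0 := by
    rw [Int.cast_one, one_mul, saw_natCast_div hk]
    split_ifs with hk0
    · norm_num [hk0]
    · ring
  rw [homDedekindSum, sum_congr rfl hterm, sum_sub_distrib, sum_add_distrib, sum_sub_distrib,
    ← sum_div, ← sum_div, sum_range_natCast, sum_range_natCast_sq]
  simp only [sum_const, card_range, nsmul_eq_mul, sum_ite_eq', mem_range, hn.pos, if_true]
  field_simp
  ring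

end HomogeneousSums

section ThreeTermRelation

/-- The increment of `x ↦ ((x / n))` from `j - 1/2` to `j + 1/2`: the function grows with slope
`1 / n` and drops by `1` at the multiples of `n`. -/
noncomputable def sawIncrement (n : ℕ) (j : ℤ) : ℝ :=
  1 / n - if (n : ℤ) ∣ j then 1 else 0

theorem saw_add_half_div {n : ℕ} (hn : n ≠ 0) (j : ℤ) :
    saw ((j + 1 / 2) / n) = saw (j / n) + sawIncrement n j / 2 := by
  have hn0 : (0 : ℝ) < n := mod_cast hn.pos
  have hdiv : (n : ℝ) * (j / n : ℤ) + (j % n : ℤ) = j := mod_cast Int.mul_ediv_add_emod j n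
  have hmod : ((j % n : ℤ) : ℝ) + 1 ≤ n := mod_cast Int.emod_lt_of_pos j (mod_cast hn.pos)
  have hmod_nonneg : (0 : ℝ) ≤ (j % n : ℤ) := mod_cast Int.emod_nonneg j (mod_cast hn)
  rw [saw_of_mem_Ioo (m := j / n)
    ⟨by rw [lt_div_iff₀ hn0]; linarith, by rw [div_lt_iff₀ hn0]; linarith⟩, sawIncrement]
  split_ifs with hj
  · obtain ⟨k, rfl⟩ := hj
    have hcancel : ((n * k : ℤ) : ℝ) / n = k := by
      push_cast
      field_simp
    rw [hcancel, saw_intCast, Int.mul_ediv_cancel_left k (mod_cast hn)]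
    push_cast
    field_simp
    ring
  · have hmod_pos : (0 : ℝ) < (j % n : ℤ) :=
      hmod_nonneg.lt_of_ne' (mod_cast fun h ↦ hj (Int.dvd_of_emod_eq_zero h))
    rw [saw_of_mem_Ioo (m := j / n)
      ⟨by rw [lt_div_iff₀ hn0]; linarith, by rw [div_lt_iff₀ hn0]; linarith⟩]
    ring

theorem saw_sub_half_div {n : ℕ} (hn : n ≠ 0) (j : ℤ) :
    saw ((j - 1 / 2) / n) = saw (j / n) - sawIncrement n j / 2 := by
  have hreflect : ((j : ℝ) - 1 / 2) / n = -(((-j : ℤ) + 1 / 2) / n) := by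
    push_cast
    ring
  have hsymm : sawIncrement n (-j) = sawIncrement n j := by simp [sawIncrement]
  rw [hreflect, saw_neg, saw_add_half_div hn, hsymm, Int.cast_neg, neg_div, saw_neg]
  ring

theorem sum_sawIncrement_product_rule {p q r N : ℕ} (hN : N ≠ 0) (hp : p ∣ N) (hq : q ∣ N)
    (hr : r ∣ N) :
    ∑ j ∈ range N, sawIncrement p j * (saw (j / q) * saw (j / r)) +
        ∑ j ∈ range N, sawIncrement q j * (saw (j / p) * saw (j / r)) +
        ∑ j ∈ range N, sawIncrement r j * (saw (j / p) * saw (j / q)) +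
        1 / 4 * ∑ j ∈ range N, sawIncrement p j * sawIncrement q j * sawIncrement r j = 0 := by
  have hstep {n : ℕ} (hn : n ∣ N) (j : ℕ) :
      saw ((j - 1 / 2) / n) = saw (j / n) - sawIncrement n j / 2 ∧
        saw (((j + 1 : ℕ) - 1 / 2) / n) = saw (j / n) + sawIncrement n j / 2 := by
    have hn0 : n ≠ 0 := ne_zero_of_dvd_ne_zero hN hn
    have hmid : ((j + 1 : ℕ) : ℝ) - 1 / 2 = (j : ℤ) + 1 / 2 := by
      push_cast
      ring
    exact ⟨saw_sub_half_div hn0 j, hmid ▸ saw_add_half_div hn0 j⟩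
  have hperiod {n : ℕ} (hn : n ∣ N) : saw ((N - 1 / 2) / n) = saw (((0 : ℕ) - 1 / 2) / n) := by
    simpa [add_comm, sub_eq_add_neg] using
      saw_add_intCast_div_of_dvd (-(1 / 2)) (Int.natCast_dvd_natCast.2 hn)
  have htelescope := sum_range_sub
    (fun j : ℕ ↦ saw ((j - 1 / 2) / p) * saw ((j - 1 / 2) / q) * saw ((j - 1 / 2) / r)) N
  rw [hperiod hp, hperiod hq, hperiod hr, sub_self] at htelescope
  rw [← htelescope, mul_sum, ← sum_add_distrib, ← sum_add_distrib, ← sum_add_distrib]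
  refine sum_congr rfl fun j _ ↦ ?_
  rw [(hstep hp j).1, (hstep hp j).2, (hstep hq j).1, (hstep hq j).2, (hstep hr j).1,
    (hstep hr j).2]
  -- `(u + α)(v + β)(w + γ) - (u - α)(v - β)(w - γ) = 2(αvw + βuw + γuv) + 2αβγ`
  ring

theorem sum_sawIncrement_mul_mul {p q r N : ℕ} (hN : N ≠ 0) (hpq : p.lcm q = N)
    (hpr : p.lcm r = N) (hqr : q.lcm r = N) :
    ∑ j ∈ range N, sawIncrement p j * sawIncrement q j * sawIncrement r j =
      1 / p + 1 / q + 1 / r - 1 - 2 * N / (p * q * r) := by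
  have hp : p ∣ N := hpq ▸ Nat.dvd_lcm_left p q
  have hq : q ∣ N := hqr ▸ Nat.dvd_lcm_left q r
  have hr : r ∣ N := hqr ▸ Nat.dvd_lcm_right q r
  let δ (m j : ℕ) : ℝ := if m ∣ j then 1 else 0
  have δ_mul {m n : ℕ} (h : m.lcm n = N) (j : ℕ) : δ m j * δ n j = δ N j := by
    simp only [δ, ← h, Nat.lcm_dvd_iff, ite_zero_mul_ite_zero, mul_one]
  have δ_mul_of_dvd {m : ℕ} (h : m ∣ N) (j : ℕ) : δ N j * δ m j = δ N j := by
    simp only [δ, mul_ite, mul_one, mul_zero, ite_eq_left_iff]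
    intro hmj
    exact (if_neg fun hNj ↦ hmj (h.trans hNj)).symm
  have increment_eq (m j : ℕ) : sawIncrement m j = 1 / m - δ m j := by
    simp only [sawIncrement, Int.natCast_dvd_natCast, δ]
  have hexpand (j : ℕ) : sawIncrement p j * sawIncrement q j * sawIncrement r j =
      1 / (p * q * r) - 1 / (q * r) * δ p j - 1 / (p * r) * δ q j - 1 / (p * q) * δ r j +
        (1 / p + 1 / q + 1 / r - 1) * δ N j := by
    simp only [increment_eq, one_div, mul_inv]
    linear_combination ((r : ℝ)⁻¹ - δ r j) * δ_mul hpq j + (q : ℝ)⁻¹ * δ_mul hpr j +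
      (p : ℝ)⁻¹ * δ_mul hqr j - δ_mul_of_dvd hr j
  have sum_δ {m : ℕ} (h : m ∣ N) : ∑ j ∈ range N, δ m j = N / m := sum_range_ite_dvd_one hN h
  simp only [hexpand, sum_add_distrib, sum_sub_distrib, ← mul_sum, sum_δ, hp, hq, hr, dvd_refl,
    sum_const, card_range, nsmul_eq_mul]
  have hN' : (N : ℝ) ≠ 0 := mod_cast hN
  field_simp
  ring

theorem homDedekindSum_mul_mul_self {a b c : ℕ} (hb : b ≠ 0) (hc : c ≠ 0) (hbc : b.Coprime c) :
    homDedekindSum b c (a * b * c) = homDedekindSum 1 1 a := by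
  have drop_c := homDedekindSum_natCast_mul_right 1 (a * b) hc hbc.isCoprime
  have drop_b := homDedekindSum_natCast_mul_right 1 a hb (b := 1) isCoprime_one_left
  rw [mul_one] at drop_c drop_b
  rw [drop_c, homDedekindSum_comm, drop_b]

theorem sum_sawIncrement_mul_saw_mul_saw {a b c : ℕ} (ha : a ≠ 0) (hb : b ≠ 0) (hc : c ≠ 0)
    (hbc : b.Coprime c) :
    ∑ j ∈ range (a * b * c),
        sawIncrement (b * c) j * (saw (j / (a * c : ℕ)) * saw (j / (a * b : ℕ))) =
      homDedekindSum 1 1 a / (b * c) - homDedekindSum b c a := by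
  have hgrid (j : ℕ) : saw (j / (a * c : ℕ)) * saw (j / (a * b : ℕ)) =
      saw ((b : ℤ) * j / (a * b * c : ℕ)) * saw ((c : ℤ) * j / (a * b * c : ℕ)) := by
    congr 2 <;> push_cast <;> field_simp
  have hslope : ∑ j ∈ range (a * b * c), saw (j / (a * c : ℕ)) * saw (j / (a * b : ℕ)) =
      homDedekindSum 1 1 a := by
    rw [← homDedekindSum_mul_mul_self hb hc hbc]
    exact sum_congr rfl fun j _ ↦ hgrid j
  have hjumps : ∑ j ∈ range (a * b * c),
      (if b * c ∣ j then saw (j / (a * c : ℕ)) * saw (j / (a * b : ℕ)) else 0) =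
        homDedekindSum b c a := by
    rw [mul_assoc, mul_comm a, sum_range_mul_ite_dvd (mul_ne_zero hb hc)]
    refine sum_congr rfl fun k _ ↦ ?_
    congr 2 <;> push_cast <;> field_simp
  simp only [sawIncrement, Int.natCast_dvd_natCast, sub_mul, sum_sub_distrib, ite_mul, one_mul,
    zero_mul, hjumps]
  rw [← mul_sum, hslope, Nat.cast_mul, one_div_mul_eq_div]

theorem homDedekindSum_three_term {a b c : ℕ} (ha : a ≠ 0) (hb : b ≠ 0) (hc : c ≠ 0)
    (hab : a.Coprime b) (hbc : b.Coprime c) (hac : a.Coprime c) :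
    homDedekindSum b c a + homDedekindSum a c b + homDedekindSum a b c =
      -1 / 4 + ((a : ℝ) / (b * c) + b / (a * c) + c / (a * b)) / 12 := by
  have hN : a * b * c ≠ 0 := mul_ne_zero (mul_ne_zero ha hb) hc
  have lcm_bc_ac : (b * c).lcm (a * c) = a * b * c := by
    rw [Nat.lcm_mul_right, hab.symm.lcm_eq_mul, mul_comm b]
  have lcm_bc_ab : (b * c).lcm (a * b) = a * b * c := by
    rw [mul_comm a, Nat.lcm_mul_left, hac.symm.lcm_eq_mul]; ring
  have lcm_ac_ab : (a * c).lcm (a * b) = a * b * c := by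
    rw [Nat.lcm_mul_left, hbc.symm.lcm_eq_mul]; ring
  have hproduct := sum_sawIncrement_product_rule hN (lcm_bc_ac ▸ Nat.dvd_lcm_left _ _)
    (lcm_ac_ab ▸ Nat.dvd_lcm_left _ _) (lcm_ac_ab ▸ Nat.dvd_lcm_right _ _)
  have sum_a := sum_sawIncrement_mul_saw_mul_saw ha hb hc hbc
  have sum_b := sum_sawIncrement_mul_saw_mul_saw hb ha hc hac
  have sum_c := sum_sawIncrement_mul_saw_mul_saw hc ha hb hab
  rw [mul_comm b a] at sum_b
  rw [show c * a * b = a * b * c by ring, mul_comm c b, mul_comm c a] at sum_c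
  rw [sum_a, sum_b, sum_c, sum_sawIncrement_mul_mul hN lcm_bc_ac lcm_bc_ab lcm_ac_ab] at hproduct
  simp only [homDedekindSum_one_one] at hproduct
  push_cast at hproduct
  rw [← sub_eq_zero, ← neg_eq_zero, ← hproduct]
  field_simp
  ring

end ThreeTermRelation

theorem S_reciprocity {a b : ℕ} (ha : a ≠ 0) (hb : b ≠ 0) (hab : a.Coprime b) :
    S a b + S b a = -3 + ((a : ℝ) / b + b / a + 1 / (a * b)) := by
  have hthree := homDedekindSum_three_term ha hb one_ne_zero hab (Nat.coprime_one_right b)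
    (Nat.coprime_one_right a)
  have hone : homDedekindSum a b 1 = 0 := by simp [homDedekindSum, saw_zero]
  rw [hone] at hthree
  simp only [Nat.cast_one, mul_one] at hthree
  rw [S_eq_homDedekindSum, S_eq_homDedekindSum]
  linear_combination 12 * hthree

theorem S_eq_homDedekindSum_of_mul_modEq_one (a : ℤ) {n : ℕ} {t u : ℤ} (h : t * u ≡ 1 [ZMOD n]) :
    S (a * u) n = 12 * homDedekindSum a t n := by
  obtain ⟨k, hk⟩ := h.dvd
  have hu : IsCoprime u n := ⟨t, k, by linear_combination -hk⟩
  rw [S_eq_homDedekindSum, ← homDedekindSum_mul_left_mul_left a t hu, mul_comm u a, mul_comm u t,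
    homDedekindSum_congr rfl h]

theorem S_mul_eq_neg_of_sq_modEq_neg_one {a : ℤ} (b : ℤ) {n : ℕ} (h : a ^ 2 ≡ -1 [ZMOD n]) :
    S (a * b) n = -(12 * homDedekindSum a b n) := by
  have hinv : -a * a ≡ 1 [ZMOD n] := by simpa [pow_two] using h.neg
  rw [mul_comm, S_eq_homDedekindSum_of_mul_modEq_one b hinv, homDedekindSum_comm,
    homDedekindSum_neg_left, mul_neg]

theorem stmt_7 (a b t : ℕ) (ha : 0 < a) (hb : 0 < b) (ht : 0 < t)
    (hab : Nat.Coprime a b) (hbt : Nat.Coprime b t) (htdvd : t ∣ a ^ 2 + 1)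
    (c : ℕ) (hc : c = b * ((a ^ 2 + 1) / t))
    (tstar : ℤ) (htstar : (t : ℤ) * tstar ≡ 1 [ZMOD (b : ℤ)]) :
    S (a : ℤ) c =
      ((b : ℝ) ^ 2 - 1) * (a : ℝ) / ((t : ℝ) * b) - S ((a : ℤ) * b) t
        + S ((a : ℤ) * tstar) b := by
  obtain ⟨q, hq⟩ := htdvd
  rw [hq, Nat.mul_div_cancel_left q ht] at hc
  have hqz : (t : ℤ) * q = a ^ 2 + 1 := mod_cast hq.symm
  have hqr : (a : ℝ) ^ 2 + 1 = t * q := mod_cast hq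
  have hq0 : q ≠ 0 := by rintro rfl; simp at hq
  have hat : a.Coprime t := Nat.isCoprime_iff_coprime.1 ⟨-a, q, by linear_combination hqz⟩
  have haq : a.Coprime q := Nat.isCoprime_iff_coprime.1 ⟨-a, t, by linear_combination hqz⟩
  have three_term := homDedekindSum_three_term ha.ne' hb.ne' ht.ne' hab hbt hat
  have reciprocity := S_reciprocity ha.ne' (mul_ne_zero hb.ne' hq0) (hab.mul_right haq)
  have sum_mod_a : S (b * q : ℕ) a = 12 * homDedekindSum b t a := by
    rw [Nat.cast_mul]
    exact S_eq_homDedekindSum_of_mul_modEq_one b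
      (Int.modEq_iff_dvd.2 ⟨-a, by linear_combination -hqz⟩)
  have sum_mod_b := S_eq_homDedekindSum_of_mul_modEq_one a htstar
  have sum_mod_t : S (a * b) t = -(12 * homDedekindSum a b t) :=
    S_mul_eq_neg_of_sq_modEq_neg_one b (Int.modEq_iff_dvd.2 ⟨-q, by linear_combination hqz⟩)
  have rational_part : (a : ℝ) / (b * q : ℕ) + (b * q : ℕ) / a + 1 / (a * (b * q : ℕ)) -
      (a / (b * t) + b / (a * t) + t / (a * b)) = (b ^ 2 - 1) * a / (t * b) := by
    push_cast
    field_simp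
    linear_combination (t - b ^ 2 * q) * hqr
  rw [hc, sum_mod_b, sum_mod_t]
  linear_combination reciprocity - sum_mod_a - 12 * three_term + rational_part
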